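/- For every ε > 0 there exists N such that for every integer n ≥ N the following holds: there exists a 2-coloring c of [n] such that the number of monochromatic increasing 4-APs in [n] under c is at most (1/72 + ε)·n², and there exists a 2-coloring c' of [n] such that the number of monochromatic increasing 5-APs in [n] under c' is at most (1/304 + ε)·n². (In the paper's notation, c_4 ≤ 1/72 and c_5 ≤ 1/304.) -/

import Mathlib

/-- Number of monochromatic increasing `k`-APs in `[n] = {1,…,n}` under the
2-coloring `c`: pairs `(a,d)` of integers with `d ≥ 1`, `1 ≤ a`,
`a+(k-1)d ≤ n`, and `c a = c (a+d) = ⋯ = c (a+(k-1)d)`. -/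
noncomputable def incMonoAPCount (n k : ℕ) (c : ℤ → Fin 2) : ℕ :=
  Set.ncard {p : ℤ × ℤ | 1 ≤ p.2 ∧ 1 ≤ p.1 ∧ p.1 + ((k : ℤ) - 1) * p.2 ≤ n ∧
    ∀ i < k, c (p.1 + (i : ℤ) * p.2) = c p.1}

/-- The colour of `x`: whether the `p`-free part of `x` is a quadratic residue modulo `p`. -/
noncomputable def residueColoring (p : ℕ) [Fact p.Prime] (x : ℤ) : Fin 2 :=
  if quadraticChar (ZMod p) ((x / (p : ℤ) ^ padicValInt p x : ℤ) : ZMod p) = 1 then 1 else 0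

section

variable {p : ℕ} [Fact p.Prime]

lemma residueColoring_mul (x : ℤ) : residueColoring p (p * x) = residueColoring p x := by
  rcases eq_or_ne x 0 with rfl | hx
  · simp
  have hp : (p : ℤ) ≠ 0 := by exact_mod_cast (Fact.out : p.Prime).ne_zero
  have hv : padicValInt p (p * x) = padicValInt p x + 1 := by
    rw [padicValInt.mul hp hx, padicValInt.self (Fact.out : p.Prime).one_lt, add_comm]
  simp only [residueColoring, hv, pow_succ', Int.mul_ediv_mul_of_pos _ _
    (show (0 : ℤ) < p by exact_mod_cast (Fact.out : p.Prime).pos)]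

lemma residueColoring_of_not_dvd {x : ℤ} (hx : ¬ (p : ℤ) ∣ x) :
    residueColoring p x = if quadraticChar (ZMod p) (x : ZMod p) = 1 then 1 else 0 := by
  simp [residueColoring, padicValInt.eq_zero_of_not_dvd hx]

lemma residueColoring_ne {x y : ℤ}
    (h : quadraticChar (ZMod p) (x : ZMod p) * quadraticChar (ZMod p) (y : ZMod p) = -1) :
    residueColoring p x ≠ residueColoring p y := by
  have hx : ¬ (p : ℤ) ∣ x := fun hd => by
    simp [(ZMod.intCast_zmod_eq_zero_iff_dvd x p).2 hd] at h
  have hy : ¬ (p : ℤ) ∣ y := fun hd => by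
    simp [(ZMod.intCast_zmod_eq_zero_iff_dvd y p).2 hd] at h
  rw [residueColoring_of_not_dvd hx, residueColoring_of_not_dvd hy]
  rcases Int.mul_eq_neg_one_iff_eq_one_or_neg_one.1 h with ⟨h₁, h₂⟩ | ⟨h₁, h₂⟩ <;> simp [h₁, h₂]

lemma exists_residueColoring_ne {k : ℕ}
    (h : ∀ b : ZMod p, ∃ i < k, ∃ j < k,
      quadraticChar (ZMod p) (b + (i : ℕ)) * quadraticChar (ZMod p) (b + (j : ℕ)) = -1)
    (a : ℤ) {d : ℤ} (hd : ¬ (p : ℤ) ∣ d) :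
    ∃ i < k, residueColoring p (a + (i : ℤ) * d) ≠ residueColoring p a := by
  have hd' : (d : ZMod p) ≠ 0 := fun h0 => hd ((ZMod.intCast_zmod_eq_zero_iff_dvd d p).1 h0)
  obtain ⟨i, hi, j, hj, hij⟩ := h (a / d)
  have key (l : ℕ) : ((a + (l : ℤ) * d : ℤ) : ZMod p) = d * (a / d + l) := by
    push_cast
    field_simp
  have hne : residueColoring p (a + (i : ℤ) * d) ≠ residueColoring p (a + (j : ℤ) * d) := by
    apply residueColoring_ne
    rw [key, key, map_mul, map_mul]
    linear_combination hij * quadraticChar (ZMod p) (d : ZMod p) ^ 2 - quadraticChar_sq_one hd'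
  by_contra! hc
  exact hne ((hc i hi).trans (hc j hj).symm)

end

lemma card_filter_not_dvd_Icc_le {p : ℕ} (hp : 0 < p) (m : ℕ) :
    (((Finset.Icc 1 m).filter (fun a : ℕ => ¬ p ∣ a)).card : ℝ) ≤ (p - 1) / p * m + 1 := by
  have h := Finset.card_filter_add_card_filter_not (s := Finset.Icc 1 m) (fun a => p ∣ a)
  have hdiv : ((Finset.Icc 1 m).filter (fun a => p ∣ a)).card = m / p := by
    rw [← Nat.Ioc_filter_dvd_card_eq_div]
    rfl
  rw [hdiv, Nat.card_Icc, Nat.add_sub_cancel] at h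
  have h' : ((m / p : ℕ) : ℝ) + ((Finset.Icc 1 m).filter (fun a : ℕ => ¬ p ∣ a)).card = m := by
    exact_mod_cast h
  have hlt : (m : ℝ) / p < (m / p : ℕ) + 1 := by
    rw [← Nat.floor_div_eq_div (K := ℝ)]
    exact Nat.lt_floor_add_one _
  have hp' : (p : ℝ) ≠ 0 := by positivity
  have : ((p : ℝ) - 1) / p * m = m - m / p := by field_simp
  linarith

/-- Pairs `(a, p * e)` with `p ∤ a` giving progressions of length `q + 1` in `[n]`. -/
def constResiduePairs (n p q : ℕ) : Finset (ℤ × ℤ) :=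
  (Finset.Icc 1 (n / (q * p))).biUnion fun e =>
    ((Finset.Icc 1 (n - q * p * e)).filter (fun a : ℕ => ¬ p ∣ a)).image
      fun a : ℕ => ((a : ℤ), (p : ℤ) * e)

lemma card_constResiduePairs_le {p q : ℕ} (hp : 0 < p) (hq : 0 < q) (n : ℕ) :
    ((constResiduePairs n p q).card : ℝ) ≤ (p - 1) / (2 * q * p ^ 2) * n ^ 2 + n := by
  set M := n / (q * p) with hM
  have hp1 : (1 : ℝ) ≤ p := by exact_mod_cast hp
  have hq1 : (1 : ℝ) ≤ q := by exact_mod_cast hq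
  have hbound : ((constResiduePairs n p q).card : ℝ) ≤
      ∑ e ∈ Finset.Icc 1 M, (((p : ℝ) - 1) / p * (n - q * p * e) + 1) := by
    refine (Nat.cast_le.2 Finset.card_biUnion_le).trans ?_
    rw [Nat.cast_sum]
    refine Finset.sum_le_sum fun e he => ?_
    refine (Nat.cast_le.2 Finset.card_image_le).trans ?_
    refine (card_filter_not_dvd_Icc_le hp _).trans_eq ?_
    have : q * p * e ≤ n := by
      rw [mul_comm]
      exact (Nat.le_div_iff_mul_le (by positivity)).1 (Finset.mem_Icc.1 he).2
    push_cast [Nat.cast_sub this]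
    rfl
  have hsum (N : ℕ) : ∑ e ∈ Finset.Icc 1 N, (((p : ℝ) - 1) / p * (n - q * p * e) + 1) =
      ((p : ℝ) - 1) / p * (n * N - q * p * (N * (N + 1) / 2)) + N := by
    induction N with
    | zero => simp
    | succ N ih =>
      rw [Finset.sum_Icc_succ_top (by lia), ih]
      push_cast
      ring
  rw [hsum] at hbound
  have hMn : (M : ℝ) ≤ n := by exact_mod_cast Nat.div_le_self _ _
  have hopt : (n : ℝ) * M - q * p * (M * (M + 1) / 2) ≤ n ^ 2 / (2 * (q * p)) := by
    rw [le_div_iff₀ (by positivity)]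
    have : (0 : ℝ) ≤ (q * p) ^ 2 * M := by positivity
    nlinarith [sq_nonneg ((n : ℝ) - q * p * M)]
  have hfac : (0 : ℝ) ≤ ((p : ℝ) - 1) / p := div_nonneg (by linarith) (by linarith)
  have heq : ((p : ℝ) - 1) / p * (n ^ 2 / (2 * (q * p))) =
      (p - 1) / (2 * q * p ^ 2) * n ^ 2 := by
    field_simp
  linarith [mul_le_mul_of_nonneg_left hopt hfac]

section

variable {p q : ℕ} {c : ℤ → Fin 2}

lemma incMonoAPCount_le_add (hp : 0 < p) (hq : 0 < q) (hmul : ∀ x, c (p * x) = c x)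
    (hne : ∀ a d : ℤ, ¬ (p : ℤ) ∣ d → ∃ i < q + 1, c (a + (i : ℤ) * d) ≠ c a) (n : ℕ) :
    incMonoAPCount n (q + 1) c ≤
      (constResiduePairs n p q).card + incMonoAPCount (n / p) (q + 1) c := by
  set S : ℕ → Set (ℤ × ℤ) := fun n =>
    {x : ℤ × ℤ | 1 ≤ x.2 ∧ 1 ≤ x.1 ∧ x.1 + (((q + 1 : ℕ) : ℤ) - 1) * x.2 ≤ n ∧
      ∀ i < q + 1, c (x.1 + (i : ℤ) * x.2) = c x.1}
  have hp0 : (0 : ℤ) < p := by exact_mod_cast hp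
  have hq1 : (1 : ℤ) ≤ q := by exact_mod_cast hq
  have hfin (n : ℕ) : (S n).Finite := by
    refine ((Set.finite_Icc (1 : ℤ) n).prod (Set.finite_Icc (1 : ℤ) n)).subset ?_
    rintro ⟨a, d⟩ ⟨hd, ha, hn, -⟩
    simp only [Nat.cast_add, Nat.cast_one, add_sub_cancel_right] at hd ha hn
    exact ⟨⟨ha, by nlinarith⟩, ⟨hd, by nlinarith⟩⟩
  have hsub : S n ⊆ ↑(constResiduePairs n p q) ∪
      (fun x : ℤ × ℤ => ((p : ℤ) * x.1, (p : ℤ) * x.2)) '' S (n / p) := by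
    rintro ⟨a, d⟩ ⟨hd, ha, hn, hc⟩
    simp only [Nat.cast_add, Nat.cast_one, add_sub_cancel_right] at hd ha hn hc
    have hpd : (p : ℤ) ∣ d := by
      by_contra h
      obtain ⟨i, hi, h⟩ := hne a d h
      exact h (hc i hi)
    obtain ⟨e, rfl⟩ := hpd
    have he : 1 ≤ e := by by_contra! h; nlinarith
    by_cases hpa : (p : ℤ) ∣ a
    · right
      obtain ⟨b, rfl⟩ := hpa
      have hb : 1 ≤ b := by by_contra! h; nlinarith
      refine ⟨(b, e), ⟨he, hb, ?_, fun i hi => ?_⟩, rfl⟩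
      · push_cast
        rw [add_sub_cancel_right, Int.le_ediv_iff_mul_le hp0]
        linarith
      · rw [← hmul, ← hmul b, ← hc i hi]
        congr 1
        ring
    · left
      lift a to ℕ using by lia
      lift e to ℕ using by lia
      norm_cast at ha he hn hpa
      have hle : q * p * e + a ≤ n := by linarith
      simp only [constResiduePairs, Finset.coe_biUnion, Set.mem_iUnion, Finset.mem_coe,
        Finset.mem_image, Finset.mem_filter, Finset.mem_Icc]
      refine ⟨e, ⟨he, ?_⟩, a, ⟨⟨ha, by lia⟩, hpa⟩, rfl⟩
      rw [Nat.le_div_iff_mul_le (by positivity)]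
      linarith
  calc (S n).ncard ≤ _ := Set.ncard_le_ncard hsub
        ((Finset.finite_toSet _).union ((hfin _).image _))
    _ ≤ _ := Set.ncard_union_le _ _
    _ ≤ _ := by
      rw [Set.ncard_coe_finset]
      exact Nat.add_le_add_left (Set.ncard_image_le (hfin _)) _

theorem incMonoAPCount_le (hp : 2 ≤ p) (hq : 0 < q) (hmul : ∀ x, c (p * x) = c x)
    (hne : ∀ a d : ℤ, ¬ (p : ℤ) ∣ d → ∃ i < q + 1, c (a + (i : ℤ) * d) ≠ c a) (n : ℕ) :
    (incMonoAPCount n (q + 1) c : ℝ) ≤ 1 / (2 * q * (p + 1)) * n ^ 2 + 2 * n := by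
  induction n using Nat.strong_induction_on with
  | _ n ih =>
  rcases Nat.eq_zero_or_pos n with rfl | hn
  · have : incMonoAPCount 0 (q + 1) c = 0 := by
      rw [incMonoAPCount]
      convert Set.ncard_empty (ℤ × ℤ)
      refine Set.eq_empty_of_forall_notMem ?_
      rintro ⟨a, d⟩ ⟨hd, ha, h, -⟩
      push_cast at hd ha h
      nlinarith
    simp [this]
  have hp2 : (2 : ℝ) ≤ p := by exact_mod_cast hp
  have hq1 : (1 : ℝ) ≤ q := by exact_mod_cast hq
  have hrec : (incMonoAPCount n (q + 1) c : ℝ) ≤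
      (constResiduePairs n p q).card + incMonoAPCount (n / p) (q + 1) c := by
    exact_mod_cast incMonoAPCount_le_add (by lia) hq hmul hne n
  have hih := ih (n / p) (Nat.div_lt_self hn hp)
  have hdiv : ((n / p : ℕ) : ℝ) ≤ n / p := Nat.cast_div_le
  have hsq : ((n / p : ℕ) : ℝ) ^ 2 ≤ (n / p) ^ 2 := by gcongr
  have hhalf : (n : ℝ) / p ≤ n / 2 := by gcongr
  have hmain : 1 / (2 * q * (p + 1)) * ((n / p : ℕ) : ℝ) ^ 2 ≤
      1 / (2 * q * (p + 1)) * ((n : ℝ) / p) ^ 2 := by gcongr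
  have heq : ((p : ℝ) - 1) / (2 * q * p ^ 2) * n ^ 2 + 1 / (2 * q * (p + 1)) * ((n : ℝ) / p) ^ 2 =
      1 / (2 * q * (p + 1)) * n ^ 2 := by
    field_simp
    ring
  linarith [card_constResiduePairs_le (by lia) hq n (p := p)]

end

instance : Fact (Nat.Prime 11) := ⟨by norm_num⟩

instance : Fact (Nat.Prime 37) := ⟨by norm_num⟩

lemma exists_quadraticChar_mul_eq_neg_one_eleven (b : ZMod 11) :
    ∃ i < 4, ∃ j < 4, quadraticChar (ZMod 11) (b + (i : ℕ)) *
      quadraticChar (ZMod 11) (b + (j : ℕ)) = -1 := by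
  revert b
  decide

lemma exists_quadraticChar_mul_eq_neg_one_thirtySeven (b : ZMod 37) :
    ∃ i < 5, ∃ j < 5, quadraticChar (ZMod 37) (b + (i : ℕ)) *
      quadraticChar (ZMod 37) (b + (j : ℕ)) = -1 := by
  revert b
  decide

theorem c4_le_and_c5_le :
    ∀ ε : ℝ, 0 < ε → ∃ N : ℕ, ∀ n : ℕ, N ≤ n →
      (∃ c : ℤ → Fin 2, (incMonoAPCount n 4 c : ℝ) ≤ (1 / 72 + ε) * (n : ℝ) ^ 2) ∧
      (∃ c' : ℤ → Fin 2, (incMonoAPCount n 5 c' : ℝ) ≤ (1 / 304 + ε) * (n : ℝ) ^ 2) := by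
  intro ε hε
  obtain ⟨N, hN⟩ := exists_nat_gt (2 / ε)
  refine ⟨N, fun n hn => ?_⟩
  have hlin : 2 * (n : ℝ) ≤ ε * n ^ 2 := by
    have h : 2 < (n : ℝ) * ε := (div_lt_iff₀ hε).1 (hN.trans_le (by exact_mod_cast hn))
    nlinarith [(Nat.cast_nonneg n : (0 : ℝ) ≤ n)]
  refine ⟨⟨residueColoring 11, ?_⟩, ⟨residueColoring 37, ?_⟩⟩
  · have h := incMonoAPCount_le (q := 3) (by norm_num) (by norm_num) residueColoring_mul
      (fun a _ => exists_residueColoring_ne exists_quadraticChar_mul_eq_neg_one_eleven a) n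
    norm_num at h ⊢
    linarith
  · have h := incMonoAPCount_le (q := 4) (by norm_num) (by norm_num) residueColoring_mul
      (fun a _ => exists_residueColoring_ne exists_quadraticChar_mul_eq_neg_one_thirtySeven a) n
    norm_num at h ⊢
    linarith
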